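/- arXiv:2410.23434 — 5 statements merged into one kernel-verified Lean document; each statement's English description precedes it below -/
import Mathlib

section
/- Let a finite discounted MDP with state space S = Fin n_S, action space A = Fin n_A, transition probabilities P, reward r bounded by Rmax, and discount γ ∈ [0,1) be given. Let π : S → A be a deterministic policy, let ε ≥ 0, and let Q̂ : S × A → ℝ satisfy |Q̂(s,a) − Q^π(s,a)| ≤ ε for all (s,a). Let π' : S → A be greedy with respect to Q̂, i.e. for every s, Q̂(s, π'(s)) = max_{a ∈ A} Q̂(s,a). Then for every state s: V^π(s) ≤ (T* V^π)(s) ≤ V^{π'}(s) + 2ε/(1−γ). -/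
/-!
Let `δ = 2ε`. Greediness with respect to an `ε`-accurate estimate costs at most `δ` in one step:
`Q^π(s, a) ≤ Q^π(s, π' s) + δ` for every `a`. With `a = π s` this reads `V^π ≤ T^{π'} V^π + δ`.
Since `T^{π'}` turns a uniform bound `c` on a difference of two functions into the bound `γ c`,
the supremum `D` of `V^π - V^{π'}` satisfies `D ≤ γ D + δ`, that is, `D ≤ δ / (1 - γ)`. One more
application of `T^{π'}` gives `Q^π(s, a) ≤ V^{π'}(s) + γ D + δ ≤ V^{π'}(s) + δ / (1 - γ)`.
-/

theorem le_add_two_mul_of_abs_sub_le {R : Type*} [CommRing R] [LinearOrder R]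
    [IsStrictOrderedRing R] {x y x' y' ε : R} (hx : |x' - x| ≤ ε) (hy : |y' - y| ≤ ε)
    (h : x' ≤ y') : x ≤ y + 2 * ε := by
  linarith [(abs_le.mp hx).1, (abs_le.mp hy).2]

/-- A discounted Markov decision process with arbitrary state and action types, whose transition
probabilities `P s a` are discrete distributions given by their mass functions. -/
structure DiscountedMDP (S A : Type*) where
  P : S → A → S → ℝ
  r : S → A → ℝ
  γ : ℝ
  P_nonneg : ∀ s a s', 0 ≤ P s a s'
  hasSum_P : ∀ s a, HasSum (P s a) 1
  γ_nonneg : 0 ≤ γ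
  γ_lt_one : γ < 1

namespace DiscountedMDP

open Bornology Set

variable {S A : Type*} (M : DiscountedMDP S A)

/-- The one-step lookahead: the expected return of taking action `a` in state `s` and collecting
the discounted value `V` of the next state. It is `Q^π` when `V = V^π`. The series converges for
bounded `V`, the only case in which it is used. -/
noncomputable def lookahead (V : S → ℝ) (s : S) (a : A) : ℝ :=
  M.r s a + M.γ * ∑' s', M.P s a s' * V s'

/-- The Bellman optimality operator `T*`. The supremum has the junk value `0` where the lookahead
is not bounded above over the actions. -/
noncomputable def bellmanOptimality (V : S → ℝ) (s : S) : ℝ :=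
  ⨆ a, M.lookahead V s a

/-- `V` is the value function of the deterministic policy `π`. Boundedness is what singles it out
among the solutions of the Bellman equation when there are infinitely many states. -/
structure IsValue (π : S → A) (V : S → ℝ) : Prop where
  isBounded : IsBounded (range V)
  bellman : ∀ s, V s = M.lookahead V s (π s)

variable {M} {V W : S → ℝ}

theorem summable_P_mul (hV : IsBounded (range V)) (s : S) (a : A) :
    Summable fun s' => M.P s a s' * V s' := by
  obtain ⟨C, hC⟩ := hV.exists_norm_le
  refine .of_norm_bounded ((M.hasSum_P s a).summable.mul_right C) fun s' => ?_
  rw [norm_mul, Real.norm_of_nonneg (M.P_nonneg s a s')]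
  exact mul_le_mul_of_nonneg_left (hC _ (mem_range_self s')) (M.P_nonneg s a s')

theorem lookahead_le_add_of_le_add (hV : IsBounded (range V)) (hW : IsBounded (range W)) {c : ℝ}
    (h : ∀ s, V s ≤ W s + c) (s : S) (a : A) :
    M.lookahead V s a ≤ M.lookahead W s a + M.γ * c := by
  have expectation_le : ∑' s', M.P s a s' * V s' ≤ ∑' s', M.P s a s' * W s' + c := by
    have hsum : HasSum (fun s' => M.P s a s' * (W s' + c)) (∑' s', M.P s a s' * W s' + c) := by
      simpa only [mul_add, one_mul] using
        (summable_P_mul hW s a).hasSum.add ((M.hasSum_P s a).mul_right c)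
    exact hasSum_le (fun s' => mul_le_mul_of_nonneg_left (h s') (M.P_nonneg s a s'))
      (summable_P_mul hV s a).hasSum hsum
  unfold lookahead
  linarith [mul_le_mul_of_nonneg_left expectation_le M.γ_nonneg]

theorem IsValue.le_add_div_of_le_lookahead_add {π : S → A} {δ : ℝ} (hW : M.IsValue π W)
    (hV : IsBounded (range V)) (h : ∀ s, V s ≤ M.lookahead V s (π s) + δ) (s : S) :
    V s ≤ W s + δ / (1 - M.γ) := by
  have : Nonempty S := ⟨s⟩
  set D := ⨆ s, (V s - W s)
  have hbdd : BddAbove (range fun s => V s - W s) := by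
    obtain ⟨b, hb⟩ := hV.bddAbove
    obtain ⟨c, hc⟩ := hW.isBounded.bddBelow
    exact ⟨b - c, forall_mem_range.2 fun s =>
      sub_le_sub (hb (mem_range_self s)) (hc (mem_range_self s))⟩
  have le_add_D (s) : V s ≤ W s + D := sub_le_iff_le_add'.1 (le_ciSup hbdd s)
  have D_le : D ≤ M.γ * D + δ := ciSup_le fun s => by
    linarith [h s, hW.bellman s,
      lookahead_le_add_of_le_add (M := M) hV hW.isBounded le_add_D s (π s)]
  have D_le_div : D ≤ δ / (1 - M.γ) := by
    rw [le_div_iff₀ (sub_pos.2 M.γ_lt_one)]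
    linarith
  exact (le_add_D s).trans (by gcongr)

theorem IsValue.lookahead_add_le_add_div {π : S → A} {δ : ℝ} (hW : M.IsValue π W)
    (hV : IsBounded (range V)) (h : ∀ s, V s ≤ M.lookahead V s (π s) + δ) (s : S) :
    M.lookahead V s (π s) + δ ≤ W s + δ / (1 - M.γ) := by
  have hγ : 1 - M.γ ≠ 0 := (sub_pos.2 M.γ_lt_one).ne'
  calc M.lookahead V s (π s) + δ
      ≤ M.lookahead W s (π s) + M.γ * (δ / (1 - M.γ)) + δ := by
        gcongr
        exact lookahead_le_add_of_le_add hV hW.isBounded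
          (hW.le_add_div_of_le_lookahead_add hV h) s (π s)
    _ = W s + δ / (1 - M.γ) := by
        rw [← hW.bellman]
        field_simp
        ring

theorem lookahead_eq_sum [Fintype S] (s : S) (a : A) :
    M.lookahead V s a = M.r s a + M.γ * ∑ s', M.P s a s' * V s' := by
  rw [lookahead, tsum_fintype]

theorem isValue_iff_of_fintype [Fintype S] {π : S → A} :
    M.IsValue π V ↔ ∀ s, V s = M.r s (π s) + M.γ * ∑ s', M.P s (π s) s' * V s' := by
  simp only [← lookahead_eq_sum]
  exact ⟨IsValue.bellman, fun h => ⟨(finite_range V).isBounded, h⟩⟩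

theorem bellmanOptimality_eq_sup' [Fintype S] [Fintype A] [Nonempty A] (s : S) :
    M.bellmanOptimality V s = Finset.univ.sup' Finset.univ_nonempty
      fun a => M.r s a + M.γ * ∑ s', M.P s a s' * V s' := by
  simp only [bellmanOptimality, lookahead_eq_sum, Finset.sup'_univ_eq_ciSup]

end DiscountedMDP

open Set in
theorem approx_policy_improvement_general {S A : Type*} (M : DiscountedMDP S A) {π π' : S → A}
    {V V' : S → ℝ} (hV : M.IsValue π V) (hV' : M.IsValue π' V') {ε : ℝ} {Qhat : S → A → ℝ}
    (hQhat : ∀ s a, |Qhat s a - M.lookahead V s a| ≤ ε)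
    (hgreedy : ∀ s a, Qhat s a ≤ Qhat s (π' s)) (s : S) :
    V s ≤ M.bellmanOptimality V s ∧
      M.bellmanOptimality V s ≤ V' s + 2 * ε / (1 - M.γ) := by
  have : Nonempty A := ⟨π s⟩
  have lookahead_le (s a) : M.lookahead V s a ≤ M.lookahead V s (π' s) + 2 * ε :=
    le_add_two_mul_of_abs_sub_le (hQhat s a) (hQhat s (π' s)) (hgreedy s a)
  have le_lookahead (s) : V s ≤ M.lookahead V s (π' s) + 2 * ε :=
    (hV.bellman s).trans_le (lookahead_le s (π s))
  constructor
  · exact (hV.bellman s).trans_le (le_ciSup ⟨_, forall_mem_range.2 (lookahead_le s)⟩ (π s))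
  · exact ciSup_le fun a =>
      (lookahead_le s a).trans (hV'.lookahead_add_le_add_div hV.isBounded le_lookahead s)

open Finset in
/-- Approximate greedy policy improvement: if `π'` is greedy w.r.t. an `ε`-accurate
estimate `Qhat` of `Q^π`, then `V^π ≤ T* V^π ≤ V^{π'} + 2ε/(1-γ)` pointwise. -/
theorem approx_policy_improvement
    (nS nA : ℕ) [NeZero nS] [NeZero nA]
    (P : Fin nS → Fin nA → Fin nS → ℝ)
    (hPnonneg : ∀ s a s', 0 ≤ P s a s')
    (hPsum : ∀ s a, ∑ s', P s a s' = 1)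
    (r : Fin nS → Fin nA → ℝ) (Rmax : ℝ) (hRmax : 0 < Rmax)
    (hr : ∀ s a, |r s a| ≤ Rmax)
    (γ : ℝ) (hγ0 : 0 ≤ γ) (hγ1 : γ < 1)
    (π π' : Fin nS → Fin nA)
    (Vπ Vπ' : Fin nS → ℝ)
    (hVπ : ∀ s, Vπ s = r s (π s) + γ * ∑ s', P s (π s) s' * Vπ s')
    (hVπ' : ∀ s, Vπ' s = r s (π' s) + γ * ∑ s', P s (π' s) s' * Vπ' s')
    (Qπ : Fin nS → Fin nA → ℝ)
    (hQπ : ∀ s a, Qπ s a = r s a + γ * ∑ s', P s a s' * Vπ s')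
    (ε : ℝ) (hε : 0 ≤ ε)
    (Qhat : Fin nS → Fin nA → ℝ)
    (hQhat : ∀ s a, |Qhat s a - Qπ s a| ≤ ε)
    (hgreedy : ∀ s, Qhat s (π' s) = univ.sup' univ_nonempty (fun a => Qhat s a)) :
    ∀ s, Vπ s ≤ univ.sup' univ_nonempty
            (fun a => r s a + γ * ∑ s', P s a s' * Vπ s') ∧
         univ.sup' univ_nonempty (fun a => r s a + γ * ∑ s', P s a s' * Vπ s')
            ≤ Vπ' s + 2 * ε / (1 - γ) := by
  let M : DiscountedMDP (Fin nS) (Fin nA) :=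
    ⟨P, r, γ, hPnonneg, fun s a => hPsum s a ▸ hasSum_fintype (P s a), hγ0, hγ1⟩
  have hQ (s a) : M.lookahead Vπ s a = Qπ s a :=
    (DiscountedMDP.lookahead_eq_sum s a).trans (hQπ s a).symm
  simpa only [DiscountedMDP.bellmanOptimality_eq_sup'] using
    approx_policy_improvement_general M (DiscountedMDP.isValue_iff_of_fintype.2 hVπ)
      (DiscountedMDP.isValue_iff_of_fintype.2 hVπ') (by simpa only [hQ])
      (fun s a => hgreedy s ▸ le_sup' (Qhat s) (mem_univ a))
end

section
/- Let a finite discounted MDP with state space S = Fin n_S, action space A = Fin n_A, transition probabilities P, reward r bounded by Rmax, discount γ ∈ [0,1), and optimal value function V* be given. Let ε ≥ 0 and let (π^{(t)})_{t ≥ 1} be a sequence of deterministic policies such that for every t there is a function Q̂^{(t)} : S × A → ℝ with max_{s,a} |Q̂^{(t)}(s,a) − Q^{π^{(t)}}(s,a)| ≤ ε and π^{(t+1)}(s) maximizes a ↦ Q̂^{(t)}(s,a) for every s. Then for all t ≥ 1: max_s |V*(s) − V^{π^{(t+1)}}(s)| ≤ γ^t · max_s |V*(s) − V^{π^{(1)}}(s)|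 + 2ε/(1−γ)². -/
/-!
The Bellman operator `T` of a policy is monotone and `T (W + c) = T W + γ c` for constants `c`, so
`V ≤ T V + b` and `T W ≤ W` imply `V ≤ W + b / (1 - γ)`. With `b = 0` this puts `V^π` below `V*`.
A policy `π'` that is greedy for an `ε`-accurate estimate of `Q^π` is `2ε`-greedy for `Q^π`, so the
case `b = 2ε` gives `V^π ≤ V^{π'} + 2ε / (1 - γ)`. Inserting this into the Bellman equation of `π'`
yields `‖V* - V^{π'}‖ ≤ γ ‖V* - V^π‖ + 2ε / (1 - γ)`, and iterating this bound sums a geometric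
series.
-/

theorem pi_norm_eq_sup' {ι : Type*} {E : ι → Type*} [Fintype ι] [Nonempty ι]
    [∀ i, SeminormedAddGroup (E i)] (f : ∀ i, E i) :
    ‖f‖ = Finset.univ.sup' Finset.univ_nonempty fun i => ‖f i‖ :=
  le_antisymm
    ((pi_norm_le_iff_of_nonempty f).2 fun i => Finset.le_sup' (‖f ·‖) (Finset.mem_univ i))
    (Finset.sup'_le _ _ fun i _ => norm_le_pi_norm f i)

theorem mul_div_one_sub_add {K : Type*} [Field K] {c : K} (hc : c ≠ 1) (b : K) :
    c * (b / (1 - c)) + b = b / (1 - c) := by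
  have : 1 - c ≠ 0 := sub_ne_zero.2 hc.symm
  field_simp
  ring

theorem le_pow_mul_add_div_one_sub {u : ℕ → ℝ} {c b : ℝ} (hc0 : 0 ≤ c) (hc1 : c < 1) (hb : 0 ≤ b)
    (hu : ∀ n, u (n + 1) ≤ c * u n + b) (n : ℕ) : u n ≤ c ^ n * u 0 + b / (1 - c) := by
  have : 0 < 1 - c := sub_pos.2 hc1
  have excess : u n - b / (1 - c) ≤ c ^ n * (u 0 - b / (1 - c)) :=
    le_geom (u := fun k => u k - b / (1 - c)) hc0 n fun k _ => by
      linarith [hu k, mul_div_one_sub_add hc1.ne b]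
  have : 0 ≤ c ^ n * (b / (1 - c)) := by positivity
  linarith

section MarkovDecisionProcess

open Matrix

variable {S A : Type*} [Fintype S] {P : S → A → S → ℝ} {r : S → A → ℝ} {γ : ℝ}

/-- The one-step lookahead value of the action `a` in the state `s` when continuing with `V`;
for `V = V^π` it is the Q-function `Q^π(s, a)`. -/
def actionValue (P : S → A → S → ℝ) (r : S → A → ℝ) (γ : ℝ) (V : S → ℝ) (s : S) (a : A) : ℝ :=
  r s a + γ * (P s a ⬝ᵥ V)

/-- `V` is the value function `V^π` of the deterministic policy `π`, expressed by its Bellman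
equation. -/
def IsPolicyValue (P : S → A → S → ℝ) (r : S → A → ℝ) (γ : ℝ) (π : S → A) (V : S → ℝ) : Prop :=
  ∀ s, V s = actionValue P r γ V s (π s)

/-- `V` is the optimal value function `V*`, expressed as a fixed point of the Bellman optimality
operator. The maximum over actions is encoded as a least upper bound, so that `A` may be infinite
and the maximum need not be attained. -/
def IsOptimalValue (P : S → A → S → ℝ) (r : S → A → ℝ) (γ : ℝ) (V : S → ℝ) : Prop :=
  ∀ s, IsLUB (Set.range (actionValue P r γ V s)) (V s)

/-- The policy `π` is `δ`-greedy for `V`: the actions it selects maximize the one-step lookahead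
of `V` up to an error `δ`. -/
def IsApproxGreedy (P : S → A → S → ℝ) (r : S → A → ℝ) (γ δ : ℝ) (V : S → ℝ) (π : S → A) : Prop :=
  ∀ s a, actionValue P r γ V s a ≤ actionValue P r γ V s (π s) + δ

theorem isOptimalValue_iff_eq_sup' [Fintype A] [Nonempty A] {V : S → ℝ} :
    IsOptimalValue P r γ V ↔
      ∀ s, V s = Finset.univ.sup' Finset.univ_nonempty (actionValue P r γ V s) := by
  refine forall_congr' fun s => ?_
  have isLUB_iSup := isLUB_ciSup (Set.finite_range (actionValue P r γ V s)).bddAbove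
  rw [Finset.sup'_univ_eq_ciSup]
  exact ⟨fun h => h.unique isLUB_iSup, fun h => h ▸ isLUB_iSup⟩

theorem actionValue_le_add {V W : S → ℝ} {c : ℝ} {s : S} {a : A} (hP : P s a ∈ stdSimplex ℝ S)
    (hγ0 : 0 ≤ γ) (hVW : ∀ s', V s' ≤ W s' + c) :
    actionValue P r γ V s a ≤ actionValue P r γ W s a + γ * c := by
  have expectation_le : P s a ⬝ᵥ V ≤ P s a ⬝ᵥ W + c :=
    calc P s a ⬝ᵥ V ≤ P s a ⬝ᵥ (W + Function.const S c) :=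
          dotProduct_le_dotProduct_of_nonneg_left hVW hP.1
      _ = P s a ⬝ᵥ W + c := by
          rw [dotProduct_add]
          simp [dotProduct, ← Finset.sum_mul, hP.2]
  calc r s a + γ * (P s a ⬝ᵥ V) ≤ r s a + γ * (P s a ⬝ᵥ W + c) := by gcongr
    _ = r s a + γ * (P s a ⬝ᵥ W) + γ * c := by ring

theorem le_add_div_of_le_actionValue {π : S → A} {V W : S → ℝ} {b : ℝ}
    (hP : ∀ s, P s (π s) ∈ stdSimplex ℝ S) (hγ0 : 0 ≤ γ) (hγ1 : γ < 1)
    (hV : ∀ s, V s ≤ actionValue P r γ V s (π s) + b)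
    (hW : ∀ s, actionValue P r γ W s (π s) ≤ W s) (s : S) : V s ≤ W s + b / (1 - γ) := by
  have : Nonempty S := ⟨s⟩
  obtain ⟨m, hm⟩ := Finite.exists_max fun s => V s - W s
  have lookahead_le : actionValue P r γ V m (π m) ≤ actionValue P r γ W m (π m) + γ * (V m - W m) :=
    actionValue_le_add (hP m) hγ0 fun s' => by linarith [hm s']
  have max_le : V m - W m ≤ b / (1 - γ) := by
    rw [le_div_iff₀ (sub_pos.2 hγ1)]
    linarith [hV m, hW m]
  linarith [hm s]

theorem IsPolicyValue.le_of_isOptimalValue {π : S → A} {V Vstar : S → ℝ}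
    (hV : IsPolicyValue P r γ π V) (hVstar : IsOptimalValue P r γ Vstar)
    (hP : ∀ s, P s (π s) ∈ stdSimplex ℝ S) (hγ0 : 0 ≤ γ) (hγ1 : γ < 1) : V ≤ Vstar := fun s => by
  simpa using le_add_div_of_le_actionValue (b := 0) hP hγ0 hγ1
    (fun s => by simpa using (hV s).le) (fun s => (hVstar s).1 ⟨π s, rfl⟩) s

theorem isApproxGreedy_of_abs_sub_le {V : S → ℝ} {Qhat : S → A → ℝ} {π : S → A} {ε : ℝ}
    (hQhat : ∀ s a, |Qhat s a - actionValue P r γ V s a| ≤ ε)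
    (hπ : ∀ s a, Qhat s a ≤ Qhat s (π s)) : IsApproxGreedy P r γ (2 * ε) V π := fun s a => by
  linarith [(abs_le.1 (hQhat s a)).1, (abs_le.1 (hQhat s (π s))).2, hπ s a]

theorem IsApproxGreedy.le_policyValue_add {π π' : S → A} {V V' : S → ℝ} {δ : ℝ}
    (hπ' : IsApproxGreedy P r γ δ V π') (hV : IsPolicyValue P r γ π V)
    (hV' : IsPolicyValue P r γ π' V') (hP : ∀ s, P s (π' s) ∈ stdSimplex ℝ S)
    (hγ0 : 0 ≤ γ) (hγ1 : γ < 1) (s : S) : V s ≤ V' s + δ / (1 - γ) :=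
  le_add_div_of_le_actionValue hP hγ0 hγ1 (fun s => (hV s).trans_le (hπ' s (π s)))
    (fun s => (hV' s).ge) s

theorem IsOptimalValue.le_add_of_isApproxGreedy {π π' : S → A} {V V' Vstar : S → ℝ} {c δ : ℝ}
    (hVstar : IsOptimalValue P r γ Vstar) (hπ' : IsApproxGreedy P r γ δ V π')
    (hV : IsPolicyValue P r γ π V) (hV' : IsPolicyValue P r γ π' V')
    (hP : ∀ s a, P s a ∈ stdSimplex ℝ S) (hγ0 : 0 ≤ γ) (hγ1 : γ < 1)
    (hc : ∀ s, Vstar s ≤ V s + c) (s : S) : Vstar s ≤ V' s + (γ * c + δ / (1 - γ)) := by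
  refine (hVstar s).2 (Set.forall_mem_range.2 fun a => ?_)
  have improvement : ∀ s', V s' ≤ V' s' + δ / (1 - γ) :=
    hπ'.le_policyValue_add hV hV' (fun s => hP s _) hγ0 hγ1
  calc actionValue P r γ Vstar s a
      ≤ actionValue P r γ V s a + γ * c := actionValue_le_add (hP s a) hγ0 hc
    _ ≤ actionValue P r γ V s (π' s) + δ + γ * c := by gcongr; exact hπ' s a
    _ ≤ actionValue P r γ V' s (π' s) + γ * (δ / (1 - γ)) + δ + γ * c := by
        gcongr
        exact actionValue_le_add (hP s _) hγ0 improvement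
    _ = V' s + (γ * c + δ / (1 - γ)) := by
        linear_combination mul_div_one_sub_add hγ1.ne δ - hV' s

theorem IsOptimalValue.norm_sub_le_of_isApproxGreedy {π π' : S → A} {V V' Vstar : S → ℝ} {δ : ℝ}
    (hVstar : IsOptimalValue P r γ Vstar) (hπ' : IsApproxGreedy P r γ δ V π')
    (hV : IsPolicyValue P r γ π V) (hV' : IsPolicyValue P r γ π' V')
    (hP : ∀ s a, P s a ∈ stdSimplex ℝ S) (hγ0 : 0 ≤ γ) (hγ1 : γ < 1) (hδ : 0 ≤ δ) :
    ‖Vstar - V'‖ ≤ γ * ‖Vstar - V‖ + δ / (1 - γ) := by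
  have : 0 < 1 - γ := sub_pos.2 hγ1
  refine (pi_norm_le_iff_of_nonneg (by positivity)).2 fun s => ?_
  have suboptimal : V' s ≤ Vstar s :=
    hV'.le_of_isOptimalValue hVstar (fun s => hP s _) hγ0 hγ1 s
  have gap_le_norm (s : S) : Vstar s ≤ V s + ‖Vstar - V‖ :=
    sub_le_iff_le_add'.1 ((le_abs_self _).trans (norm_le_pi_norm (Vstar - V) s))
  rw [Pi.sub_apply, Real.norm_of_nonneg (sub_nonneg.2 suboptimal), sub_le_iff_le_add']
  exact hVstar.le_add_of_isApproxGreedy hπ' hV hV' hP hγ0 hγ1 gap_le_norm s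

theorem approx_policy_iteration_error_general (hP : ∀ s a, P s a ∈ stdSimplex ℝ S)
    (hγ0 : 0 ≤ γ) (hγ1 : γ < 1) {Vstar : S → ℝ} (hVstar : IsOptimalValue P r γ Vstar)
    {π : ℕ → S → A} {V : ℕ → S → ℝ} (hV : ∀ t, IsPolicyValue P r γ (π t) (V t))
    {ε : ℝ} (hε : 0 ≤ ε) {Qhat : ℕ → S → A → ℝ}
    (hQhat : ∀ t s a, |Qhat t s a - actionValue P r γ (V t) s a| ≤ ε)
    (hgreedy : ∀ t s a, Qhat t s a ≤ Qhat t s (π (t + 1) s)) (t : ℕ) :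
    ‖Vstar - V t‖ ≤ γ ^ t * ‖Vstar - V 0‖ + 2 * ε / (1 - γ) ^ 2 := by
  have : 0 < 1 - γ := sub_pos.2 hγ1
  have contraction (t : ℕ) : ‖Vstar - V (t + 1)‖ ≤ γ * ‖Vstar - V t‖ + 2 * ε / (1 - γ) :=
    hVstar.norm_sub_le_of_isApproxGreedy (isApproxGreedy_of_abs_sub_le (hQhat t) (hgreedy t))
      (hV t) (hV (t + 1)) hP hγ0 hγ1 (by positivity)
  rw [sq, ← div_div]
  exact le_pow_mul_add_div_one_sub (u := fun t => ‖Vstar - V t‖) hγ0 hγ1 (by positivity)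
    contraction t

end MarkovDecisionProcess

open Finset in
/-- Error bound for approximate policy iteration: if each policy `π^{(t+1)}` is greedy
with respect to an `ε`-accurate estimate of `Q^{π^{(t)}}`, then
`max_s |V*(s) − V^{π^{(t+1)}}(s)| ≤ γ^t max_s |V*(s) − V^{π^{(1)}}(s)| + 2ε/(1−γ)²`. -/
theorem approx_policy_iteration_error
    (nS nA : ℕ) [NeZero nS] [NeZero nA]
    (P : Fin nS → Fin nA → Fin nS → ℝ)
    (hPnonneg : ∀ s a s', 0 ≤ P s a s')
    (hPsum : ∀ s a, ∑ s', P s a s' = 1)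
    (r : Fin nS → Fin nA → ℝ) (Rmax : ℝ) (hRmax : 0 < Rmax)
    (hr : ∀ s a, |r s a| ≤ Rmax)
    (γ : ℝ) (hγ0 : 0 ≤ γ) (hγ1 : γ < 1)
    (Vstar : Fin nS → ℝ)
    (hVstar : ∀ s, Vstar s =
      univ.sup' univ_nonempty (fun a => r s a + γ * ∑ s', P s a s' * Vstar s'))
    (π : ℕ → Fin nS → Fin nA)
    (V : ℕ → Fin nS → ℝ)
    (hV : ∀ t, 1 ≤ t → ∀ s,
      V t s = r s (π t s) + γ * ∑ s', P s (π t s) s' * V t s')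
    (Q : ℕ → Fin nS → Fin nA → ℝ)
    (hQ : ∀ t, 1 ≤ t → ∀ s a,
      Q t s a = r s a + γ * ∑ s', P s a s' * V t s')
    (ε : ℝ) (hε : 0 ≤ ε)
    (Qhat : ℕ → Fin nS → Fin nA → ℝ)
    (hQhat : ∀ t, 1 ≤ t → ∀ s a, |Qhat t s a - Q t s a| ≤ ε)
    (hgreedy : ∀ t, 1 ≤ t → ∀ s,
      Qhat t s (π (t + 1) s) = univ.sup' univ_nonempty (fun a => Qhat t s a)) :
    ∀ t, 1 ≤ t →
      univ.sup' univ_nonempty (fun s => |Vstar s - V (t + 1) s|) ≤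
        γ ^ t * univ.sup' univ_nonempty (fun s => |Vstar s - V 1 s|)
          + 2 * ε / (1 - γ) ^ 2 := by
  intro t _
  have hQ' (t : ℕ) : Q (t + 1) = actionValue P r γ (V (t + 1)) :=
    funext₂ (hQ (t + 1) t.succ_pos)
  have hgreedy' (t : ℕ) (s : Fin nS) (a : Fin nA) :
      Qhat (t + 1) s a ≤ Qhat (t + 1) s (π (t + 1 + 1) s) :=
    (le_sup' _ (mem_univ a)).trans_eq (hgreedy (t + 1) t.succ_pos s).symm
  simpa only [pi_norm_eq_sup', Pi.sub_apply, Real.norm_eq_abs] using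
    approx_policy_iteration_error_general (V := fun t => V (t + 1)) (π := fun t => π (t + 1))
      (Qhat := fun t => Qhat (t + 1)) (fun s a => ⟨hPnonneg s a, hPsum s a⟩) hγ0 hγ1
      (isOptimalValue_iff_eq_sup'.2 hVstar) (fun t => hV (t + 1) t.succ_pos) hε
      (fun t => hQ' t ▸ hQhat (t + 1) t.succ_pos) hgreedy' t
end

section
/- Let n ≥ 1, γ ∈ [0,1), and let T : (Fin n → ℝ) → (Fin n → ℝ) be an operator that is monotone (f ≤ g pointwise implies T f ≤ T g pointwise) and satisfies T(f + c·1) ≤ T f + γ c · 1 pointwise for every f and every constant c ≥ 0, where 1 denotes the all-ones function. Let V* satisfy T V* = V*. If V : Fin n → ℝ and ε ≥ 0 satisfy V ≤ T V + ε·1 pointwise, then V ≤ V* + (ε/(1−γ))·1 pointwise. -/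
/-!
If `V ≤ V* + c` with `c ≥ 0`, applying `T` improves this to `V ≤ V* + (γ c + ε)`. Taking for `c` the
supremum `M` of `V - V*`, when it is nonnegative, gives `M ≤ γ M + ε`, that is, `M ≤ ε / (1 - γ)`.
-/

/-- Blackwell's discounting condition with factor `γ` for an operator on functions. As in dynamic
programming, only shifts by nonnegative constants are constrained. -/
def IsDiscounting {S R : Type*} [Semiring R] [LE R] (γ : R) (T : (S → R) → S → R) : Prop :=
  ∀ (f : S → R) (c : R), 0 ≤ c → ∀ s, T (fun x => f x + c) s ≤ T f s + γ * c

theorem IsDiscounting.le_add_mul_add {S R : Type*} [Semiring R] [Preorder R]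
    [IsOrderedAddMonoid R] {γ c ε : R} {T : (S → R) → S → R} {f g : S → R}
    (hT : IsDiscounting γ T) (hmono : Monotone T) (hg : T g ≤ g) (hf : ∀ s, f s ≤ T f s + ε)
    (hc : 0 ≤ c) (hfg : ∀ s, f s ≤ g s + c) (s : S) :
    f s ≤ g s + (γ * c + ε) :=
  calc
    f s ≤ T f s + ε := hf s
    _ ≤ T (fun x => g x + c) s + ε := by gcongr; exact hmono hfg s
    _ ≤ T g s + γ * c + ε := by gcongr; exact hT g c hc s
    _ ≤ g s + γ * c + ε := by gcongr; exact hg s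
    _ = g s + (γ * c + ε) := add_assoc ..

theorem approx_fixed_point_bound_general {S : Type*} {γ ε : ℝ} {T : (S → ℝ) → S → ℝ}
    {V Vstar : S → ℝ} (hγ : γ < 1) (hmono : Monotone T) (hT : IsDiscounting γ T)
    (hVstar : T Vstar ≤ Vstar) (hε : 0 ≤ ε) (hV : ∀ s, V s ≤ T V s + ε)
    (hbdd : BddAbove (Set.range fun s => V s - Vstar s)) (s : S) :
    V s ≤ Vstar s + ε / (1 - γ) := by
  have : Nonempty S := ⟨s⟩
  have hγ' : 0 < 1 - γ := sub_pos.2 hγ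
  set M := ⨆ x, (V x - Vstar x)
  have hVM (x : S) : V x ≤ Vstar x + M := sub_le_iff_le_add'.1 (le_ciSup hbdd x)
  suffices hM : M ≤ ε / (1 - γ) from (hVM s).trans (by gcongr)
  rcases le_total M 0 with hM | hM
  · exact hM.trans (div_nonneg hε hγ'.le)
  · have hM_le : M ≤ γ * M + ε :=
      ciSup_le fun x => sub_le_iff_le_add'.2 (hT.le_add_mul_add hmono hVstar hV hM hVM x)
    rw [le_div_iff₀ hγ']
    linarith

/-- Abstract approximate-improvement lemma: for a monotone operator `T` with the
`γ`-discounted constant-shift property and fixed point `V*`, any `V` with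
`V ≤ T V + ε·1` satisfies `V ≤ V* + (ε/(1−γ))·1`. -/
theorem approx_fixed_point_bound
    (n : ℕ) (hn : 1 ≤ n)
    (γ : ℝ) (hγ0 : 0 ≤ γ) (hγ1 : γ < 1)
    (T : (Fin n → ℝ) → (Fin n → ℝ))
    (hmono : ∀ f g : Fin n → ℝ, (∀ s, f s ≤ g s) → ∀ s, T f s ≤ T g s)
    (hshift : ∀ (f : Fin n → ℝ) (c : ℝ), 0 ≤ c →
      ∀ s, T (fun x => f x + c) s ≤ T f s + γ * c)
    (Vstar : Fin n → ℝ) (hfix : T Vstar = Vstar)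
    (V : Fin n → ℝ) (ε : ℝ) (hε : 0 ≤ ε)
    (hV : ∀ s, V s ≤ T V s + ε) :
    ∀ s, V s ≤ Vstar s + ε / (1 - γ) :=
  approx_fixed_point_bound_general hγ1 hmono hshift hfix.le hε hV (Set.finite_range _).bddAbove
end

section
/- Let S, A, d, K ≥ 1, let U be a real S × d matrix and W a real A × d matrix with orthonormal columns (Uᵀ U = I_d, Wᵀ W = I_d), let Σ be an invertible diagonal d × d real matrix, and set Q := U Σ Wᵀ. Let ι : Fin K → Fin S and ȷ : Fin K → Fin A be injective, and let L and R be diagonal K × K matrices with positive diagonal entries. Define D_U := L · U(ι(·),:) and D_W := R · W(ȷ(·),:), and assume D_Uᵀ D_U and D_Wᵀ D_W are invertible (D_U and D_W have rank d). Let N := D_W (D_Wᵀ D_W)^{-1} Σ^{-1} (D_Uᵀ D_U)^{-1} D_Uᵀ, which is the Moore–Penrose pseudoinverse of L Q(ι(·), ȷ(·)) R. Then for every (s,a) ∈ Fin S × Fin A: Q(s,a) = Σ_{u,v ∈ Fin K} Q(s, ȷ(u)) · R(u,u) · N(u,v) · L(v,v) · Q(ι(v), a). -/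
open Matrix

/-!
Weighting the anchor columns and rows of `Q = U M Wᵀ` gives `U M D_Wᵀ` and `D_U M Wᵀ`. In their
product with `N` placed in between, the one-sided inverses of `D_Wᵀ` and `D_U` inside `N` cancel
these outer factors, leaving `U (M M' M) Wᵀ`. This is `Q` as soon as `M'` is an inner inverse of
the core `M`, that is, `M M' M = M`; for `M = Σ` one takes `M' = Σ⁻¹`.
-/

section

variable {α m n d e p q : Type*}

theorem mul_mul_eq_cross_of_inner_inverse [Semiring α] [Fintype d] [DecidableEq d] [Fintype e]
    [DecidableEq e] [Fintype p] [Fintype q] (U : Matrix m d α) (V : Matrix e n α)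
    {M : Matrix d e α} {M' : Matrix e d α} (hM : M * M' * M = M)
    {E : Matrix p d α} {E' : Matrix d p α} (hE : E' * E = 1)
    {F : Matrix e q α} {F' : Matrix q e α} (hF : F * F' = 1) :
    U * M * V = (U * M * F) * (F' * M' * E') * (E * M * V) :=
  calc
    U * M * V = U * (M * M' * M) * V := by rw [hM]
    _ = U * M * (F * F') * M' * (E' * E) * M * V := by
      simp only [hF, hE, Matrix.mul_one, Matrix.mul_assoc]
    _ = (U * M * F) * (F' * M' * E') * (E * M * V) := by simp only [Matrix.mul_assoc]

theorem inv_gram_mul_transpose_mul_self [CommRing α] [Fintype d] [DecidableEq d] [Fintype p]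
    {D : Matrix p d α} (hD : IsUnit (Dᵀ * D)) : (Dᵀ * D)⁻¹ * Dᵀ * D = 1 := by
  rw [Matrix.mul_assoc, nonsing_inv_mul _ ((isUnit_iff_isUnit_det _).mp hD)]

theorem transpose_mul_self_mul_inv_gram [CommRing α] [Fintype d] [DecidableEq d] [Fintype p]
    {D : Matrix p d α} (hD : IsUnit (Dᵀ * D)) : Dᵀ * (D * (Dᵀ * D)⁻¹) = 1 := by
  rw [← Matrix.mul_assoc, mul_nonsing_inv _ ((isUnit_iff_isUnit_det _).mp hD)]

theorem diagonal_mul_submatrix_mul [Semiring α] [Fintype d] [Fintype p] [DecidableEq p]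
    (l : p → α) (ι : p → m) (A : Matrix m d α) (B : Matrix d n α) :
    diagonal l * (A * B).submatrix ι id = diagonal l * A.submatrix ι id * B := by
  rw [submatrix_mul A B ι id id Function.bijective_id, submatrix_id_id, Matrix.mul_assoc]

theorem mul_transpose_submatrix_mul_diagonal [CommSemiring α] [Fintype d] [Fintype q]
    [DecidableEq q] (ρ : q → α) (jj : q → n) (A : Matrix m d α) (W : Matrix n d α) :
    (A * Wᵀ).submatrix id jj * diagonal ρ = A * (diagonal ρ * W.submatrix jj id)ᵀ := by
  rw [submatrix_mul A Wᵀ id id jj Function.bijective_id, submatrix_id_id, Matrix.mul_assoc,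
    transpose_mul, diagonal_transpose, transpose_submatrix]

theorem mul_diagonal_mul_mul_diagonal_mul_apply [Semiring α] [Fintype p] [DecidableEq p]
    [Fintype q] [DecidableEq q] (C : Matrix m q α) (ρ : q → α) (N : Matrix q p α) (l : p → α)
    (B : Matrix p n α) (i : m) (j : n) :
    (C * diagonal ρ * N * (diagonal l * B)) i j =
      ∑ u, ∑ v, C i u * ρ u * N u v * l v * B v j := by
  rw [Matrix.mul_assoc (C * diagonal ρ), mul_apply]
  simp only [mul_apply (M := N), mul_diagonal, diagonal_mul, Finset.mul_sum, mul_assoc]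

theorem CUR_exact_recovery_general [CommRing α] [Fintype d] [DecidableEq d] [Fintype e]
    [DecidableEq e] [Fintype p] [DecidableEq p] [Fintype q] [DecidableEq q]
    (U : Matrix m d α) (W : Matrix n e α)
    (M : Matrix d e α) (M' : Matrix e d α) (hM : M * M' * M = M)
    (ι : p → m) (jj : q → n) (l : p → α) (ρ : q → α)
    (Q : Matrix m n α) (hQ : Q = U * M * Wᵀ)
    (DU : Matrix p d α) (DW : Matrix q e α)
    (hDU : DU = diagonal l * U.submatrix ι id) (hDW : DW = diagonal ρ * W.submatrix jj id)
    (hDUrank : IsUnit (DUᵀ * DU)) (hDWrank : IsUnit (DWᵀ * DW))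
    (N : Matrix q p α) (hN : N = DW * (DWᵀ * DW)⁻¹ * M' * (DUᵀ * DU)⁻¹ * DUᵀ)
    (s : m) (a : n) :
    Q s a = ∑ u, ∑ v, Q s (jj u) * ρ u * N u v * l v * Q (ι v) a := by
  have weighted_columns : Q.submatrix id jj * diagonal ρ = U * M * DWᵀ := by
    rw [hQ, hDW, mul_transpose_submatrix_mul_diagonal]
  have weighted_rows : diagonal l * Q.submatrix ι id = DU * M * Wᵀ := by
    rw [hQ, hDU, Matrix.mul_assoc U, diagonal_mul_submatrix_mul, Matrix.mul_assoc _ M]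
  have recovery :
      Q = Q.submatrix id jj * diagonal ρ * N * (diagonal l * Q.submatrix ι id) := by
    rw [weighted_columns, weighted_rows, hN, Matrix.mul_assoc _ (DUᵀ * DU)⁻¹, hQ]
    exact mul_mul_eq_cross_of_inner_inverse U Wᵀ hM (inv_gram_mul_transpose_mul_self hDUrank)
      (transpose_mul_self_mul_inv_gram hDWrank)
  exact (congrFun₂ recovery s a).trans (mul_diagonal_mul_mul_diagonal_mul_apply ..)

theorem diagonal_mul_inv_mul_diagonal [CommRing α] [Fintype d] [DecidableEq d] {σ : d → α}
    (hσ : ∀ i, IsUnit (σ i)) : diagonal σ * (diagonal σ)⁻¹ * diagonal σ = diagonal σ := by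
  have hunit : IsUnit (diagonal σ) := isUnit_diagonal.mpr (Pi.isUnit_iff.mpr hσ)
  rw [mul_nonsing_inv _ ((isUnit_iff_isUnit_det _).mp hunit), Matrix.one_mul]

end

/-- Exact CUR-type recovery of a rank-`d` matrix `Q = U Σ Wᵀ` from anchor rows `ι`
and columns `jj`, with diagonal reweighting matrices `L`, `R`. -/
theorem CUR_exact_recovery
    (S A d K : ℕ) (hS : 1 ≤ S) (hA : 1 ≤ A) (hd : 1 ≤ d) (hK : 1 ≤ K)
    (U : Matrix (Fin S) (Fin d) ℝ) (W : Matrix (Fin A) (Fin d) ℝ)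
    (hUorth : Uᵀ * U = 1) (hWorth : Wᵀ * W = 1)
    (σ : Fin d → ℝ) (hσ : ∀ i, σ i ≠ 0)
    (ι : Fin K → Fin S) (hι : Function.Injective ι)
    (jj : Fin K → Fin A) (hjj : Function.Injective jj)
    (l ρ : Fin K → ℝ) (hl : ∀ k, 0 < l k) (hρ : ∀ k, 0 < ρ k)
    (Q : Matrix (Fin S) (Fin A) ℝ)
    (hQ : Q = U * Matrix.diagonal σ * Wᵀ)
    (DU DW : Matrix (Fin K) (Fin d) ℝ)
    (hDU : DU = Matrix.diagonal l * U.submatrix ι id)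
    (hDW : DW = Matrix.diagonal ρ * W.submatrix jj id)
    (hDUrank : IsUnit (DUᵀ * DU)) (hDWrank : IsUnit (DWᵀ * DW))
    (N : Matrix (Fin K) (Fin K) ℝ)
    (hN : N = DW * (DWᵀ * DW)⁻¹ * (Matrix.diagonal σ)⁻¹ * (DUᵀ * DU)⁻¹ * DUᵀ) :
    ∀ (s : Fin S) (a : Fin A),
      Q s a = ∑ u : Fin K, ∑ v : Fin K,
        Q s (jj u) * ρ u * N u v * l v * Q (ι v) a :=
  CUR_exact_recovery_general U W _ _ (diagonal_mul_inv_mul_diagonal fun i => (hσ i).isUnit)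
    ι jj l ρ Q hQ DU DW hDU hDW hDUrank hDWrank N hN
end

section
/- Let S, d ≥ 1 with d ≤ S, and let U, Û be real S × d matrices, each with orthonormal columns (Uᵀ U = I_d and Ûᵀ Û = I_d). Define, for each s ∈ Fin S, the leverage scores ℓ_s := ‖U_{s,:}‖₂² / d, the clipped estimates ℓ̃_s := max( ‖Û_{s,:}‖₂², d/S ), and the normalized estimates ℓ̂_s := ℓ̃_s / Σ_{s'} ℓ̃_{s'}. Suppose that for every s ∈ Fin S: ‖U_{s,:} − Û_{s,:} (Ûᵀ U)‖₂ ≤ (1 − 1/√2) · max( ‖U_{s,:}‖₂, √(d/(4S)) ). Then for every s ∈ Fin S: ℓ̂_s ≥ ℓ_s / 4. -/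
open Matrix Finset

/-!
Since `Û` and `U` have orthonormal columns, their `L²` operator norms are at most `1`, so `Ûᵀ U` is
a contraction and the rotated row `Û_s (Ûᵀ U)` is no longer than `Û_s`. With `c = 1 / √2`, the
triangle inequality then gives `c ‖U_s‖ ≤ ‖Û_s‖` for the rows longer than `√(d / (4S))`, while for
the other rows `c² ‖U_s‖²` is below the clipping level `d / S`. In both cases the clipped score is
at least `‖U_s‖² / 2`. Clipping adds at most `d / S` per row to scores of total `d`, so the
normalizing sum is at most `2d`.
-/

open WithLp (toLp)

section Clipping

variable {ι K : Type*} [Fintype ι] [Field K] [LinearOrder K] [IsStrictOrderedRing K]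

lemma sum_max_div_card_le {a : ι → K} (ha : ∀ i, 0 ≤ a i) {d : K} (hd : 0 ≤ d) :
    ∑ i, max (a i) (d / Fintype.card ι) ≤ ∑ i, a i + d := by
  have hlevel : 0 ≤ d / Fintype.card ι := by positivity
  calc ∑ i, max (a i) (d / Fintype.card ι)
      ≤ ∑ i, (a i + d / Fintype.card ι) :=
        sum_le_sum fun i _ => max_le_add_of_nonneg (ha i) hlevel
    _ = ∑ i, a i + d * (Fintype.card ι / Fintype.card ι) := by
        rw [sum_add_distrib, sum_const, nsmul_eq_mul, card_univ, mul_div_left_comm]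
    _ ≤ ∑ i, a i + d := by
        gcongr
        exact mul_le_of_le_one_right hd (div_self_le_one _)

end Clipping

section Rows

variable {E F : Type*} [SeminormedAddCommGroup E] [SeminormedAddCommGroup F]

lemma mul_norm_le_norm_of_norm_sub_le {u w : E} {c : ℝ} (h : ‖u - w‖ ≤ (1 - c) * ‖u‖) :
    c * ‖u‖ ≤ ‖w‖ := by
  linarith [norm_sub_norm_le u w]

lemma sq_mul_norm_sq_le_max {u w : E} {c τ : ℝ} (hc : 0 ≤ c)
    (h : ‖u - w‖ ≤ (1 - c) * max ‖u‖ τ) :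
    c ^ 2 * ‖u‖ ^ 2 ≤ max (‖w‖ ^ 2) (c ^ 2 * τ ^ 2) := by
  rcases le_total ‖u‖ τ with hshort | hlong
  · apply le_max_of_le_right
    gcongr
  · apply le_max_of_le_left
    rw [max_eq_left hlong] at h
    rw [← mul_pow]
    gcongr
    exact mul_norm_le_norm_of_norm_sub_le h

theorem leverage_score_estimation_general {ι : Type*} [Fintype ι] {v : ι → F} {d : ℝ} (hd : 0 < d)
    (hv : ∑ j, ‖v j‖ ^ 2 ≤ d) {c τ : ℝ} (hc : 0 ≤ c) (hτ : c ^ 2 * τ ^ 2 ≤ d / Fintype.card ι)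
    {i : ι} {u w : E} (hw : ‖w‖ ≤ ‖v i‖) (hclose : ‖u - w‖ ≤ (1 - c) * max ‖u‖ τ) :
    c ^ 2 / 2 * (‖u‖ ^ 2 / d) ≤
      max (‖v i‖ ^ 2) (d / Fintype.card ι) / ∑ j, max (‖v j‖ ^ 2) (d / Fintype.card ι) := by
  have hrow : c ^ 2 * ‖u‖ ^ 2 ≤ max (‖v i‖ ^ 2) (d / Fintype.card ι) :=
    (sq_mul_norm_sq_le_max hc hclose).trans (by gcongr)
  have hsum : ∑ j, max (‖v j‖ ^ 2) (d / Fintype.card ι) ≤ 2 * d := by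
    linarith [sum_max_div_card_le (fun j => sq_nonneg ‖v j‖) hd.le]
  have hsum_pos : 0 < ∑ j, max (‖v j‖ ^ 2) (d / Fintype.card ι) := by
    have : Nonempty ι := ⟨i⟩
    exact sum_pos (fun j _ => lt_max_of_lt_right (by positivity)) univ_nonempty
  calc c ^ 2 / 2 * (‖u‖ ^ 2 / d) = c ^ 2 * ‖u‖ ^ 2 / (2 * d) := by ring
    _ ≤ max (‖v i‖ ^ 2) (d / Fintype.card ι) / (2 * d) := by gcongr
    _ ≤ max (‖v i‖ ^ 2) (d / Fintype.card ι) / ∑ j, max (‖v j‖ ^ 2) (d / Fintype.card ι) := by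
        gcongr

end Rows

section Matrices

open scoped Matrix.Norms.L2Operator

variable {m n k 𝕜 : Type*} [Fintype m] [Fintype n] [Fintype k] [RCLike 𝕜]

lemma sum_norm_sq_row_eq_trace (A : Matrix m n 𝕜) :
    ((∑ i, ‖toLp 2 (A i)‖ ^ 2 : ℝ) : 𝕜) = trace (Aᴴ * A) := by
  simp only [EuclideanSpace.norm_sq_eq, trace, diag_apply, mul_apply, conjTranspose_apply,
    RCLike.star_def, RCLike.conj_mul]
  push_cast
  exact sum_comm

variable [DecidableEq n]

lemma sum_norm_sq_row_of_conjTranspose_mul_self_eq_one {A : Matrix m n 𝕜} (hA : Aᴴ * A = 1) :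
    ∑ i, ‖toLp 2 (A i)‖ ^ 2 = Fintype.card n := by
  have h := sum_norm_sq_row_eq_trace A
  rw [hA, trace_one] at h
  exact_mod_cast h

lemma l2_opNorm_le_one_of_conjTranspose_mul_self_eq_one {A : Matrix m n 𝕜} (hA : Aᴴ * A = 1) :
    ‖A‖ ≤ 1 := by
  rw [← sq_le_one_iff₀ (norm_nonneg A), sq, ← l2_opNorm_conjTranspose_mul_self, hA]
  exact IsStarProjection.norm_le _ (.one _)

lemma norm_toLp_vecMul_le (x : m → 𝕜) (A : Matrix m n 𝕜) :
    ‖toLp 2 (x ᵥ* A)‖ ≤ ‖A‖ * ‖toLp 2 x‖ := by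
  classical
  have h := l2_opNorm_mulVec Aᴴ (toLp 2 (star x))
  rw [l2_opNorm_conjTranspose] at h
  simpa [← star_vecMul, EuclideanSpace.norm_eq] using h

lemma norm_toLp_vecMul_conjTranspose_mul_le [DecidableEq k] {A : Matrix m k 𝕜} {B : Matrix m n 𝕜}
    (hA : Aᴴ * A = 1) (hB : Bᴴ * B = 1) (x : k → 𝕜) :
    ‖toLp 2 (x ᵥ* (Aᴴ * B))‖ ≤ ‖toLp 2 x‖ := by
  classical
  have hcontract : ‖Aᴴ * B‖ ≤ 1 :=
    calc ‖Aᴴ * B‖ ≤ ‖Aᴴ‖ * ‖B‖ := l2_opNorm_mul _ _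
      _ = ‖A‖ * ‖B‖ := by rw [l2_opNorm_conjTranspose]
      _ ≤ 1 := mul_le_one₀ (l2_opNorm_le_one_of_conjTranspose_mul_self_eq_one hA) (norm_nonneg B)
        (l2_opNorm_le_one_of_conjTranspose_mul_self_eq_one hB)
  exact (norm_toLp_vecMul_le x _).trans (mul_le_of_le_one_left (norm_nonneg _) hcontract)

end Matrices

/-- Deterministic leverage-score estimation guarantee: if each row of `Û` is close (up to
the rotation `Ûᵀ U`) to the corresponding row of `U` at a row-dependent scale, then the
clipped and normalized estimated leverage scores are within a factor `4` of the true
leverage scores. -/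
theorem leverage_score_estimation
    (S d : ℕ) (hS : 1 ≤ S) (hd1 : 1 ≤ d) (hdS : d ≤ S)
    (U Uhat : Matrix (Fin S) (Fin d) ℝ)
    (hUorth : Uᵀ * U = 1) (hUhatorth : Uhatᵀ * Uhat = 1)
    (hclose : ∀ s : Fin S,
      Real.sqrt (∑ j, (U s j - ∑ k, Uhat s k * (Uhatᵀ * U) k j) ^ 2) ≤
        (1 - 1 / Real.sqrt 2) *
          max (Real.sqrt (∑ j, (U s j) ^ 2)) (Real.sqrt ((d : ℝ) / (4 * S)))) :
    ∀ s : Fin S,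
      (max (∑ j, (Uhat s j) ^ 2) ((d : ℝ) / S)) /
          (∑ s' : Fin S, max (∑ j, (Uhat s' j) ^ 2) ((d : ℝ) / S)) ≥
        ((∑ j, (U s j) ^ 2) / d) / 4 := by
  intro s
  have hd : (0 : ℝ) < d := by exact_mod_cast hd1
  have hfactor : (1 / √2) ^ 2 / 2 = (1 / 4 : ℝ) := by norm_num [div_pow]
  have hlevel : (1 / √2) ^ 2 * √((d : ℝ) / (4 * S)) ^ 2 ≤ d / Fintype.card (Fin S) := by
    rw [div_pow, Real.sq_sqrt zero_le_two, Real.sq_sqrt (by positivity), Fintype.card_fin]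
    have : (0 : ℝ) ≤ d / S := by positivity
    linarith [show (d : ℝ) / (4 * S) = d / S / 4 by ring]
  have hrotated := norm_toLp_vecMul_conjTranspose_mul_le hUhatorth hUorth (Uhat s)
  have htotal := sum_norm_sq_row_of_conjTranspose_mul_self_eq_one hUhatorth
  have hclose_norm : ‖toLp 2 (U s) - toLp 2 (Uhat s ᵥ* (Uhatᵀ * U))‖ ≤
      (1 - 1 / √2) * max ‖toLp 2 (U s)‖ √((d : ℝ) / (4 * S)) := by
    simpa [EuclideanSpace.norm_eq, vecMul, dotProduct] using hclose s
  have h := leverage_score_estimation_general hd (by simpa using htotal.le) (by positivity)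
    hlevel hrotated hclose_norm
  simp only [EuclideanSpace.real_norm_sq_eq, Fintype.card_fin, hfactor] at h
  linarith
end
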